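/- arXiv:2411.18333 — 2 statements merged into one kernel-verified Lean document; each statement's English description precedes it below -/
import Mathlib

section
/- Let X be a di-exact z-exact category. Then the category ses(X) of short exact sequences of X is di-exact if and only if the lattice nsub(A) of normal subobjects is distributive for every object A of X. -/
open CategoryTheory CategoryTheory.Limits

universe v u

variable {C : Type u} [Category.{v} C]

/-- A morphism is a *normal monomorphism* if it is a kernel of some morphism. -/
def IsNormalMonoMap [HasZeroMorphisms C] {X Y : C} (f : X ⟶ Y) : Prop :=
  Nonempty (NormalMono f)

/-- A morphism is a *normal epimorphism* if it is a cokernel of some morphism. -/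
def IsNormalEpiMap [HasZeroMorphisms C] {X Y : C} (f : X ⟶ Y) : Prop :=
  Nonempty (NormalEpi f)

/-- A morphism is *normal* if it factors as a normal epimorphism followed by a
normal monomorphism. -/
def IsNormalMap [HasZeroMorphisms C] {X Y : C} (f : X ⟶ Y) : Prop :=
  ∃ (I : C) (e : X ⟶ I) (m : I ⟶ Y), IsNormalEpiMap e ∧ IsNormalMonoMap m ∧ e ≫ m = f

/-- A morphism is *antinormal* if it factors as a normal monomorphism followed by a
normal epimorphism. -/
def IsAntinormalMap [HasZeroMorphisms C] {X Y : C} (f : X ⟶ Y) : Prop :=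
  ∃ (I : C) (m : X ⟶ I) (e : I ⟶ Y), IsNormalMonoMap m ∧ IsNormalEpiMap e ∧ m ≫ e = f

variable (C) in
/-- A z-exact category is *di-exact* if every antinormal morphism is normal. -/
def IsDiExact [HasZeroMorphisms C] : Prop :=
  ∀ ⦃X Y : C⦄ (f : X ⟶ Y), IsAntinormalMap f → IsNormalMap f

variable (C) in
/-- A z-exact category is *homologically self-dual* if for every totally normal sequence of
monomorphisms `f : X ⟶ Y`, `g : Y ⟶ Z`, the induced morphism `Y/X ⟶ Z/X` between the
cokernels is a normal monomorphism. -/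
def IsHomologicallySelfDual [HasZeroMorphisms C] : Prop :=
  ∀ ⦃X Y Z QY QZ : C⦄ (f : X ⟶ Y) (g : Y ⟶ Z),
    IsNormalMonoMap f → IsNormalMonoMap g → IsNormalMonoMap (f ≫ g) →
    ∀ (p : Y ⟶ QY) (wp : f ≫ p = 0), IsColimit (CokernelCofork.ofπ p wp) →
    ∀ (q : Z ⟶ QZ) (wq : (f ≫ g) ≫ q = 0), IsColimit (CokernelCofork.ofπ q wq) →
    ∀ (u : QY ⟶ QZ), p ≫ u = g ≫ q → IsNormalMonoMap u

/-- The poset of normal subobjects of an object. -/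
abbrev NormalSubobject [HasZeroMorphisms C] (A : C) : Type (max u v) :=
  {P : Subobject A // Nonempty (NormalMono P.arrow)}

/-- Modularity of the poset of normal subobjects, expressed via `IsLUB`/`IsGLB`. -/
def NormalSubobjectsModular [HasZeroMorphisms C] (A : C) : Prop :=
  ∀ P Q R S T U V : NormalSubobject A, R ≤ P →
    IsLUB {Q, R} S → IsGLB {P, S} T → IsGLB {P, Q} U → IsLUB {U, R} V → T = V

/-- Distributivity of the poset of normal subobjects, expressed via `IsLUB`/`IsGLB`. -/
def NormalSubobjectsDistrib [HasZeroMorphisms C] (A : C) : Prop :=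
  ∀ P Q R S T U V W : NormalSubobject A,
    IsLUB {Q, R} S → IsGLB {P, S} T → IsGLB {P, Q} U → IsGLB {P, R} V →
    IsLUB {U, V} W → T = W


/-- A short exact sequence in a pointed category: `f` is a kernel of `g` and
`g` is a cokernel of `f`. -/
structure SES (C : Type u) [Category.{v} C] [HasZeroMorphisms C] : Type (max u v) where
  X : C
  Y : C
  Z : C
  f : X ⟶ Y
  g : Y ⟶ Z
  w : f ≫ g = 0
  isKernel : Nonempty (IsLimit (KernelFork.ofι f w))
  isCokernel : Nonempty (IsColimit (CokernelCofork.ofπ g w))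

namespace SES

variable {C : Type u} [Category.{v} C] [HasZeroMorphisms C]

/-- Morphisms of short exact sequences: componentwise commuting triples. -/
@[ext] structure Hom (S T : SES C) : Type v where
  a : S.X ⟶ T.X
  b : S.Y ⟶ T.Y
  c : S.Z ⟶ T.Z
  comm₁ : S.f ≫ b = a ≫ T.f
  comm₂ : S.g ≫ c = b ≫ T.g

instance : Category (SES C) where
  Hom := Hom
  id S := ⟨𝟙 _, 𝟙 _, 𝟙 _, by simp, by simp⟩
  comp u v := ⟨u.a ≫ v.a, u.b ≫ v.b, u.c ≫ v.c,
    by rw [← Category.assoc, u.comm₁, Category.assoc, v.comm₁, ← Category.assoc],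
    by rw [← Category.assoc, u.comm₂, Category.assoc, v.comm₂, ← Category.assoc]⟩
  id_comp u := by apply Hom.ext <;> simp [CategoryStruct.id, CategoryStruct.comp]
  comp_id u := by apply Hom.ext <;> simp [CategoryStruct.id, CategoryStruct.comp]
  assoc u v w := by apply Hom.ext <;> simp [CategoryStruct.comp]

instance : HasZeroMorphisms (SES C) where
  zero S T := ⟨⟨0, 0, 0, by simp, by simp⟩⟩
  comp_zero u T := by apply Hom.ext <;> exact comp_zero
  zero_comp S {T U} u := by apply Hom.ext <;> exact zero_comp

end SES

namespace DiEx

section Basic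

variable {C : Type u} [Category.{v} C] [HasZeroMorphisms C]

/-- `k` is a kernel of `f`. -/
def IsKer {K A B : C} (k : K ⟶ A) (f : A ⟶ B) : Prop :=
  Mono k ∧ k ≫ f = 0 ∧ ∀ ⦃W : C⦄ (t : W ⟶ A), t ≫ f = 0 → ∃ s, s ≫ k = t

/-- `q` is a cokernel of `f`. -/
def IsCok {A B Q : C} (q : B ⟶ Q) (f : A ⟶ B) : Prop :=
  Epi q ∧ f ≫ q = 0 ∧ ∀ ⦃W : C⦄ (t : B ⟶ W), f ≫ t = 0 → ∃ s, q ≫ s = t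

theorem IsKer.lim {K A B : C} {k : K ⟶ A} {f : A ⟶ B} (h : IsKer k f) (w : k ≫ f = 0) :
    Nonempty (IsLimit (KernelFork.ofι k w)) := by
  obtain ⟨hm, _, hl⟩ := h
  choose l hl using hl
  exact ⟨KernelFork.IsLimit.ofι k w (fun t ht => l t ht) (fun t ht => hl t ht)
    (fun t ht m hm' => by rw [← cancel_mono k, hl, hm'])⟩

theorem IsCok.colim {A B Q : C} {q : B ⟶ Q} {f : A ⟶ B} (h : IsCok q f) (w : f ≫ q = 0) :
    Nonempty (IsColimit (CokernelCofork.ofπ q w)) := by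
  obtain ⟨hm, _, hl⟩ := h
  choose l hl using hl
  exact ⟨CokernelCofork.IsColimit.ofπ q w (fun t ht => l t ht) (fun t ht => hl t ht)
    (fun t ht m hm' => by rw [← cancel_epi q, hl, hm'])⟩

theorem isKer_of_lim {K A B : C} {k : K ⟶ A} {f : A ⟶ B} {w : k ≫ f = 0}
    (h : IsLimit (KernelFork.ofι k w)) : IsKer k f := by
  refine ⟨?_, w, fun W t ht => ?_⟩
  · exact mono_of_isLimit_fork h
  · obtain ⟨l, hl⟩ := KernelFork.IsLimit.lift' h t ht
    exact ⟨l, hl⟩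

theorem isCok_of_colim {A B Q : C} {q : B ⟶ Q} {f : A ⟶ B} {w : f ≫ q = 0}
    (h : IsColimit (CokernelCofork.ofπ q w)) : IsCok q f := by
  refine ⟨?_, w, fun W t ht => ?_⟩
  · exact epi_of_isColimit_cofork h
  · obtain ⟨l, hl⟩ := CokernelCofork.IsColimit.desc' h t ht
    exact ⟨l, hl⟩

theorem nm_iff {K A : C} {k : K ⟶ A} :
    IsNormalMonoMap k ↔ ∃ (B : C) (f : A ⟶ B), IsKer k f := by
  constructor
  · rintro ⟨h⟩
    exact ⟨h.Z, h.g, isKer_of_lim h.isLimit⟩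
  · rintro ⟨B, f, h⟩
    obtain ⟨l⟩ := h.lim h.2.1
    exact ⟨⟨B, f, h.2.1, l⟩⟩

theorem ne_iff {B Q : C} {q : B ⟶ Q} :
    IsNormalEpiMap q ↔ ∃ (A : C) (f : A ⟶ B), IsCok q f := by
  constructor
  · rintro ⟨h⟩
    exact ⟨h.W, h.g, isCok_of_colim h.isColimit⟩
  · rintro ⟨B, f, h⟩
    obtain ⟨l⟩ := h.colim h.2.1
    exact ⟨⟨B, f, h.2.1, l⟩⟩

theorem IsKer.nm {K A B : C} {k : K ⟶ A} {f : A ⟶ B} (h : IsKer k f) : IsNormalMonoMap k :=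
  nm_iff.2 ⟨_, _, h⟩

theorem IsCok.ne {A B Q : C} {q : B ⟶ Q} {f : A ⟶ B} (h : IsCok q f) : IsNormalEpiMap q :=
  ne_iff.2 ⟨_, _, h⟩

theorem nm_mono {K A : C} {k : K ⟶ A} (h : IsNormalMonoMap k) : Mono k := by
  obtain ⟨_, _, h⟩ := nm_iff.1 h
  exact h.1

theorem ne_epi {K A : C} {k : K ⟶ A} (h : IsNormalEpiMap k) : Epi k := by
  obtain ⟨_, _, h⟩ := ne_iff.1 h
  exact h.1

/-- lifting along a normal monomorphism -/
theorem nm_lift {K A W : C} {k : K ⟶ A} (h : IsNormalMonoMap k) (t : W ⟶ A)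
    (ht : ∀ ⦃V : C⦄ (y : A ⟶ V), k ≫ y = 0 → t ≫ y = 0) : ∃ s, s ≫ k = t := by
  obtain ⟨_, f, h⟩ := nm_iff.1 h
  exact h.2.2 t (ht f h.2.1)

theorem ne_desc {B Q W : C} {q : B ⟶ Q} (h : IsNormalEpiMap q) (t : B ⟶ W)
    (ht : ∀ ⦃V : C⦄ (y : V ⟶ B), y ≫ q = 0 → y ≫ t = 0) : ∃ s, q ≫ s = t := by
  obtain ⟨_, f, h⟩ := ne_iff.1 h
  exact h.2.2 t (ht f h.2.1)

theorem IsKer.of_cok {K A Q : C} {k : K ⟶ A} {q : A ⟶ Q} (h : IsNormalMonoMap k)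
    (hq : IsCok q k) : IsKer k q := by
  refine ⟨nm_mono h, hq.2.1, fun W t ht => nm_lift h t fun V y hy => ?_⟩
  obtain ⟨s, rfl⟩ := hq.2.2 y hy
  rw [← Category.assoc, ht, zero_comp]

theorem IsCok.of_ker {K A Q : C} {k : K ⟶ A} {q : A ⟶ Q} (h : IsNormalEpiMap q)
    (hq : IsKer k q) : IsCok q k := by
  refine ⟨ne_epi h, hq.2.1, fun W t ht => ne_desc h t fun V y hy => ?_⟩
  obtain ⟨s, rfl⟩ := hq.2.2 y hy
  rw [Category.assoc, ht, comp_zero]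

theorem isKer_kernel {A B : C} (f : A ⟶ B) [HasKernel f] : IsKer (kernel.ι f) f :=
  ⟨inferInstance, kernel.condition f, fun _ t ht => ⟨kernel.lift f t ht, kernel.lift_ι _ _ _⟩⟩

theorem isCok_cokernel {A B : C} (f : A ⟶ B) [HasCokernel f] : IsCok (cokernel.π f) f :=
  ⟨inferInstance, cokernel.condition f,
    fun _ t ht => ⟨cokernel.desc f t ht, cokernel.π_desc _ _ _⟩⟩

theorem IsCok.ne_of_epi {A B Q : C} {q : B ⟶ Q} {f : A ⟶ B} (h : IsCok q f) : IsNormalEpiMap q :=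
  h.ne

end Basic

section SESLemmas

variable {C : Type u} [Category.{v} C] [HasZeroMorphisms C]

theorem kerS (S : SES C) : IsKer S.f S.g := isKer_of_lim S.isKernel.some
theorem cokS (S : SES C) : IsCok S.g S.f := isCok_of_colim S.isCokernel.some

/-- build a short exact sequence -/
abbrev mkSES {X Y Z : C} (f : X ⟶ Y) (g : Y ⟶ Z) (hk : IsKer f g) (hc : IsCok g f) : SES C :=
  ⟨X, Y, Z, f, g, hk.2.1, hk.lim _, hc.colim _⟩

theorem comp_b {S T U : SES C} (f : S ⟶ T) (g : T ⟶ U) :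
    SES.Hom.b (f ≫ g) = SES.Hom.b f ≫ SES.Hom.b g := rfl

theorem comp_a {S T U : SES C} (f : S ⟶ T) (g : T ⟶ U) :
    SES.Hom.a (f ≫ g) = SES.Hom.a f ≫ SES.Hom.a g := rfl

theorem zero_b {S T : SES C} : SES.Hom.b (0 : S ⟶ T) = 0 := rfl

theorem hom_ext {S T : SES C} {f g : S ⟶ T} (h : SES.Hom.b f = SES.Hom.b g) : f = g := by
  have := (kerS T).1
  have := (cokS S).1
  apply SES.Hom.ext
  · rw [← cancel_mono T.f, ← SES.Hom.comm₁, ← SES.Hom.comm₁, h]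
  · exact h
  · rw [← cancel_epi S.g, SES.Hom.comm₂, SES.Hom.comm₂, h]

theorem exists_hom {S T : SES C} (b : S.Y ⟶ T.Y) (h : S.f ≫ b ≫ T.g = 0) :
    ∃ u : S ⟶ T, SES.Hom.b u = b := by
  obtain ⟨a, ha⟩ := (kerS T).2.2 (S.f ≫ b) (by rw [Category.assoc, h])
  obtain ⟨c, hc⟩ := (cokS S).2.2 (b ≫ T.g) h
  exact ⟨⟨a, b, c, ha.symm, hc⟩, rfl⟩

variable [HasZeroObject C]

open ZeroObject

/-- the sequence `0 ⟶ W ⟶ W` -/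
noncomputable abbrev bot (W : C) : SES C :=
  mkSES (0 : (0 : C) ⟶ W) (𝟙 W)
    ⟨⟨fun _ _ _ => (isZero_zero C).eq_of_tgt _ _⟩, by simp,
      fun V t ht => ⟨0, by simpa using ht.symm⟩⟩
    ⟨inferInstance, by simp, fun V t _ => ⟨t, by simp⟩⟩

/-- the sequence `W ⟶ W ⟶ 0` -/
noncomputable abbrev top (W : C) : SES C :=
  mkSES (𝟙 W) (0 : W ⟶ (0 : C))
    ⟨inferInstance, by simp, fun V t _ => ⟨t, by simp⟩⟩
    ⟨⟨fun _ _ _ => (isZero_zero C).eq_of_src _ _⟩, by simp,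
      fun V t ht => ⟨0, by simpa using ht.symm⟩⟩

theorem hom_bot {W : C} {T : SES C} (t : W ⟶ T.Y) :
    ∃ u : bot W ⟶ T, SES.Hom.b u = t :=
  exists_hom (S := bot W) t (by simp [bot, mkSES])

theorem hom_top {W : C} {T : SES C} (t : T.Y ⟶ W) :
    ∃ u : T ⟶ top W, SES.Hom.b u = t :=
  exists_hom (T := top W) t (by simp [top, mkSES])

theorem nm_ses {S T : SES C} (m : S ⟶ T) (h : IsNormalMonoMap m) :
    IsNormalMonoMap (SES.Hom.b m) ∧ IsKer S.f (SES.Hom.b m ≫ T.g) := by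
  obtain ⟨V, g, hm, h0, hl⟩ := nm_iff.1 h
  have hb : IsKer (SES.Hom.b m) (SES.Hom.b g) := by
    refine ⟨⟨fun {W} s t hst => ?_⟩, by rw [← comp_b, h0, zero_b], fun W t ht => ?_⟩
    · obtain ⟨s', hs⟩ := hom_bot (T := S) s
      obtain ⟨t', ht⟩ := hom_bot (T := S) t
      have : s' = t' := by
        rw [← cancel_mono m]
        apply hom_ext
        rw [comp_b, comp_b, hs, ht, hst]
      rw [← hs, ← ht, this]
    · obtain ⟨t', ht'⟩ := hom_bot (T := T) t
      obtain ⟨s, hs⟩ := hl t' (hom_ext (by rw [comp_b, ht', zero_b, ht]))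
      exact ⟨SES.Hom.b s, by rw [← comp_b, hs, ht']⟩
  refine ⟨hb.nm, (kerS S).1, ?_, fun W t ht => ?_⟩
  · rw [← Category.assoc, SES.Hom.comm₁, Category.assoc, (kerS T).2.1, comp_zero]
  · obtain ⟨s, hs⟩ := (kerS T).2.2 (t ≫ SES.Hom.b m) (by rw [Category.assoc, ht])
    obtain ⟨u, hu⟩ := exists_hom (S := top W) (T := T) (s ≫ T.f)
      (by simp [(kerS T).2.1])
    obtain ⟨r, hr⟩ := hl u (hom_ext (by
      rw [comp_b, hu, zero_b, hs, Category.assoc, hb.2.1, comp_zero]))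
    refine ⟨SES.Hom.a r, ?_⟩
    have := hb.1
    have e1 : SES.Hom.b r = SES.Hom.a r ≫ S.f := by
      rw [← SES.Hom.comm₁]
      exact (Category.id_comp _).symm
    rw [← e1, ← cancel_mono (SES.Hom.b m), ← comp_b, hr, hu, hs]

theorem ne_ses {T U : SES C} (e : T ⟶ U) (h : IsNormalEpiMap e) :
    IsNormalEpiMap (SES.Hom.b e) ∧ IsCok U.g (T.f ≫ SES.Hom.b e) := by
  obtain ⟨V, g, hm, h0, hl⟩ := ne_iff.1 h
  have hb : IsCok (SES.Hom.b e) (SES.Hom.b g) := by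
    refine ⟨⟨fun {W} s t hst => ?_⟩, by rw [← comp_b, h0, zero_b], fun W t ht => ?_⟩
    · obtain ⟨s', hs⟩ := hom_top (T := U) s
      obtain ⟨t', ht⟩ := hom_top (T := U) t
      have : s' = t' := by
        rw [← cancel_epi e]
        apply hom_ext
        rw [comp_b, comp_b, hs, ht, hst]
      rw [← hs, ← ht, this]
    · obtain ⟨t', ht'⟩ := hom_top (T := T) t
      obtain ⟨s, hs⟩ := hl t' (hom_ext (by rw [comp_b, ht', zero_b, ht]))
      exact ⟨SES.Hom.b s, by rw [← comp_b, hs, ht']⟩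
  refine ⟨hb.ne, (cokS U).1, ?_, fun W t ht => ?_⟩
  · rw [Category.assoc, ← SES.Hom.comm₂, ← Category.assoc, (kerS T).2.1, zero_comp]
  · obtain ⟨s, hs⟩ := (cokS T).2.2 (SES.Hom.b e ≫ t) (by rw [← Category.assoc, ht])
    obtain ⟨u, hu⟩ := exists_hom (S := T) (T := bot W) (T.g ≫ s)
      (by rw [← Category.assoc, ← Category.assoc, (kerS T).2.1, zero_comp, zero_comp])
    obtain ⟨r, hr⟩ := hl u (hom_ext (by
      rw [comp_b, hu, zero_b, hs, ← Category.assoc, hb.2.1, zero_comp]))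
    refine ⟨SES.Hom.c r, ?_⟩
    have := hb.1
    have e1 : SES.Hom.b r = U.g ≫ SES.Hom.c r := by
      rw [SES.Hom.comm₂]
      exact (Category.comp_id _).symm
    rw [← e1, ← cancel_epi (SES.Hom.b e), ← comp_b, hr, hu, hs]

theorem ses_nm {S T : SES C} (m : S ⟶ T) (h : IsNormalMonoMap (SES.Hom.b m))
    (hk : IsKer S.f (SES.Hom.b m ≫ T.g)) : IsNormalMonoMap m := by
  obtain ⟨W, q, hq⟩ := nm_iff.1 h
  obtain ⟨u, hu⟩ := hom_top (T := T) q
  have := hq.1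
  refine nm_iff.2 ⟨_, u, ⟨fun s t hst => hom_ext ?_⟩, hom_ext ?_, fun R t ht => ?_⟩
  · rw [← cancel_mono (SES.Hom.b m), ← comp_b, ← comp_b, hst]
  · rw [comp_b, hu, hq.2.1, zero_b]
  · obtain ⟨l, hl⟩ := hq.2.2 (SES.Hom.b t) (by rw [← hu]; rw [← comp_b, ht, zero_b])
    obtain ⟨r, hr⟩ := hk.2.2 (R.f ≫ l) (by
      rw [Category.assoc, ← Category.assoc l, hl, ← SES.Hom.comm₂, ← Category.assoc,
        (kerS R).2.1, zero_comp])
    obtain ⟨w, hw⟩ := exists_hom (S := R) (T := S) l (by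
      rw [← Category.assoc, ← hr, Category.assoc, (kerS S).2.1, comp_zero])
    exact ⟨w, hom_ext (by rw [comp_b, hw, hl])⟩

theorem ses_ne {T U : SES C} (e : T ⟶ U) (h : IsNormalEpiMap (SES.Hom.b e))
    (hk : IsCok U.g (T.f ≫ SES.Hom.b e)) : IsNormalEpiMap e := by
  obtain ⟨W, q, hq⟩ := ne_iff.1 h
  obtain ⟨u, hu⟩ := hom_bot (T := T) q
  have := hq.1
  refine ne_iff.2 ⟨_, u, ⟨fun s t hst => hom_ext ?_⟩, hom_ext ?_, fun R t ht => ?_⟩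
  · rw [← cancel_epi (SES.Hom.b e), ← comp_b, ← comp_b, hst]
  · rw [comp_b, hu, hq.2.1, zero_b]
  · obtain ⟨l, hl⟩ := hq.2.2 (SES.Hom.b t) (by rw [← hu]; rw [← comp_b, ht, zero_b])
    obtain ⟨r, hr⟩ := hk.2.2 (l ≫ R.g) (by
      rw [Category.assoc, ← Category.assoc _ l, hl, ← Category.assoc, SES.Hom.comm₁,
        Category.assoc, (kerS R).2.1, comp_zero])
    obtain ⟨w, hw⟩ := exists_hom (S := U) (T := R) l (by
      rw [← hr, ← Category.assoc, (kerS U).2.1, zero_comp])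
    exact ⟨w, hom_ext (by rw [comp_b, hw, hl])⟩

end SESLemmas

section Main

variable {C : Type u} [Category.{v} C] [HasZeroMorphisms C]

variable (C) in
/-- arrow-theoretic form of `(N ⊔ M) ⊓ (X ⊔ M) ≤ (N ⊓ X) ⊔ M`, with `M = ker p`. -/
def Dist : Prop :=
  ∀ ⦃A N X B K D W : C⦄ (n : N ⟶ A) (x : X ⟶ A) (p : A ⟶ B) (k : K ⟶ N) (d : D ⟶ A)
    (y : B ⟶ W), IsNormalMonoMap n → IsNormalMonoMap x → IsNormalEpiMap p →
    (∃ s : K ⟶ X, k ≫ n = s ≫ x) →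
    (∀ ⦃V : C⦄ (t : V ⟶ N) (u : V ⟶ X), t ≫ n = u ≫ x → ∃ r, r ≫ k = t) →
    (∀ ⦃V : C⦄ (z : B ⟶ V), n ≫ p ≫ z = 0 → d ≫ p ≫ z = 0) →
    (∀ ⦃V : C⦄ (z : B ⟶ V), x ≫ p ≫ z = 0 → d ≫ p ≫ z = 0) →
    k ≫ n ≫ p ≫ y = 0 → d ≫ p ≫ y = 0

variable [HasZeroObject C] [HasKernels C] [HasCokernels C]

theorem dist_of_ses (hdi : IsDiExact C) (hs : IsDiExact (SES C)) : Dist C := by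
  intro A N X B K D W n x p k d y hn hx hp hk1 hk2 hd1 hd2 hy
  obtain ⟨s, hs1⟩ := hk1
  have hxq := isCok_cokernel x
  have hxk := IsKer.of_cok hx hxq
  have := nm_mono hn
  have := nm_mono hx
  -- `k` is a kernel of `n ≫ coker x`, up to monicity
  have hK := isKer_kernel (n ≫ cokernel.π x)
  let S : SES C := mkSES _ _ (IsKer.of_cok hK.nm (isCok_cokernel _)) (isCok_cokernel _)
  let T : SES C := mkSES x (cokernel.π x) hxk hxq
  let U : SES C := mkSES (kernel.ι (cokernel.π (x ≫ p))) (cokernel.π (x ≫ p)) (isKer_kernel _)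
    (IsCok.of_ker (isCok_cokernel _).ne (isKer_kernel _))
  obtain ⟨m, hm⟩ := exists_hom (S := S) (T := T) n hK.2.1
  obtain ⟨e, he⟩ := exists_hom (S := T) (T := U) p (by
    have := cokernel.condition (x ≫ p)
    rwa [Category.assoc] at this)
  have hmn : IsNormalMonoMap m := ses_nm m (by rw [hm]; exact hn) (by rw [hm]; exact hK)
  have hen : IsNormalEpiMap e := ses_ne e (by rw [he]; exact hp)
    (by rw [he]; exact isCok_cokernel _)
  obtain ⟨I, e', m', he', hm', hc⟩ := hs _ ⟨T, m, e, hmn, hen, rfl⟩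
  obtain ⟨he1, he2⟩ := ne_ses _ he'
  obtain ⟨hm1, hm2⟩ := nm_ses _ hm'
  have hc' : SES.Hom.b e' ≫ SES.Hom.b m' = n ≫ p := by
    rw [← comp_b, hc, comp_b, hm, he]
  have := ne_epi he1
  obtain ⟨l, hl⟩ := nm_lift hm1 (d ≫ p) (fun V z hz => by
    rw [Category.assoc]
    apply hd1
    rw [← Category.assoc, ← hc', Category.assoc, hz, comp_zero])
  obtain ⟨l', hl'⟩ := hm2.2.2 l (by
    rw [← Category.assoc, hl, Category.assoc]
    apply hd2
    rw [← Category.assoc]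
    exact cokernel.condition (x ≫ p))
  obtain ⟨J, r, i, hr, hi, hri⟩ := hdi _ ⟨_, S.f, SES.Hom.b e', (kerS S).nm, he1, rfl⟩
  have := ne_epi hr
  obtain ⟨j, hj⟩ := nm_lift hi I.f (fun V z hz => by
    obtain ⟨z', rfl⟩ := he2.2.2 z (by rw [← hri, Category.assoc, hz, comp_zero])
    rw [← Category.assoc, (kerS I).2.1, zero_comp])
  have hiy : i ≫ SES.Hom.b m' ≫ y = 0 := by
    rw [← cancel_epi r, ← Category.assoc, hri, Category.assoc,
      ← Category.assoc (SES.Hom.b e'), hc', comp_zero]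
    obtain ⟨u, hu⟩ := hxk.2.2 (S.f ≫ n) (by rw [Category.assoc]; exact hK.2.1)
    obtain ⟨v, hv⟩ := hk2 S.f u hu.symm
    rw [← hv, Category.assoc]
    have : k ≫ (n ≫ p) ≫ y = 0 := by simpa using hy
    rw [this, comp_zero]
  rw [← Category.assoc, ← hl, ← hl', ← hj]
  simp only [Category.assoc, hiy, comp_zero]

theorem ses_of_dist (hdi : IsDiExact C) (hD : Dist C) : IsDiExact (SES C) := by
  rintro S U f ⟨T, m, e, hm, he, rfl⟩
  obtain ⟨hn, hm2⟩ := nm_ses _ hm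
  obtain ⟨hp, he2⟩ := ne_ses _ he
  set n := SES.Hom.b m with hndef
  set p := SES.Hom.b e with hpdef
  obtain ⟨J, e', m', he', hm', hc⟩ := hdi _ ⟨_, n, p, hn, hp, rfl⟩
  have := nm_mono hn
  have := ne_epi hp
  have := ne_epi he'
  have := nm_mono hm'
  have hnT := (kerS T).nm
  have hK := isKer_kernel (m' ≫ U.g)
  set k := kernel.ι (m' ≫ U.g)
  have hKk : k ≫ m' ≫ U.g = 0 := hK.2.1
  -- the sequence I
  let I : SES C := mkSES k (cokernel.π k) (IsKer.of_cok hK.nm (isCok_cokernel _)) (isCok_cokernel _)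
  have hSfU : S.f ≫ e' ≫ m' ≫ U.g = 0 := by
    rw [← Category.assoc e', hc]
    have h1 : S.f ≫ n ≫ T.g = 0 := hm2.2.1
    obtain ⟨a, ha⟩ := (kerS T).2.2 (S.f ≫ n) (by rw [Category.assoc, h1])
    have h2 : T.f ≫ p ≫ U.g = 0 := by rw [← Category.assoc]; exact he2.2.1
    rw [Category.assoc, ← Category.assoc, ← ha, Category.assoc, h2, comp_zero]
  have hSfk : ∃ a, a ≫ k = S.f ≫ e' := hK.2.2 _ (by rw [Category.assoc, hSfU])
  -- key claim
  have key : ∀ ⦃V : C⦄ (z : J ⟶ V), (S.f ≫ e') ≫ z = 0 → k ≫ z = 0 := by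
    -- `A0 = N ⊔ M`
    have hA0 := isKer_kernel (p ≫ cokernel.π m')
    set a0 := kernel.ι (p ≫ cokernel.π m')
    have := hA0.1
    have hm'k := IsKer.of_cok hm' (isCok_cokernel m')
    obtain ⟨α, hα⟩ := hm'k.2.2 (a0 ≫ p) (by rw [Category.assoc, hA0.2.1])
    obtain ⟨na, hna⟩ := hA0.2.2 n (by
      rw [← Category.assoc, ← hc, Category.assoc, hm'k.2.1, comp_zero])
    have hnaα : na ≫ α = e' := by
      rw [← cancel_mono m', Category.assoc, hα, ← Category.assoc, hna, hc]
    have hαne : IsNormalEpiMap α := by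
      obtain ⟨J', e1, m1, he1, hm1, hc1⟩ := hdi _ ⟨_, a0, p, hA0.nm, hp, rfl⟩
      have := ne_epi he1
      have := nm_mono hm1
      -- m1 ≅ m'
      obtain ⟨i, hi⟩ := nm_lift hm1 m' (fun V z hz => by
        have : a0 ≫ p ≫ z = 0 := by rw [← Category.assoc, ← hc1, Category.assoc, hz, comp_zero]
        rw [← cancel_epi e', ← Category.assoc, hc, ← hna, comp_zero]
        simp only [Category.assoc, this, comp_zero])
      obtain ⟨j, hj⟩ := nm_lift hm' m1 (fun V z hz => by
        rw [← cancel_epi e1, ← Category.assoc, hc1, ← hα, Category.assoc, hz, comp_zero, comp_zero])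
      have hij : i ≫ j = 𝟙 _ := by
        rw [← cancel_mono m', Category.assoc, hj, hi, Category.id_comp]
      have hji : j ≫ i = 𝟙 _ := by
        rw [← cancel_mono m1, Category.assoc, hi, hj, Category.id_comp]
      have hα' : α = e1 ≫ j := by
        rw [← cancel_mono m', hα, Category.assoc, hj, hc1]
      obtain ⟨G, g, hg⟩ := ne_iff.1 he1
      refine ne_iff.2 ⟨G, g, ?_, ?_, fun V t ht => ?_⟩
      · rw [hα']
        have : IsIso j := ⟨i, hji, hij⟩
        infer_instance
      · rw [hα', ← Category.assoc, hg.2.1, zero_comp]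
      · obtain ⟨s, hs⟩ := hg.2.2 t ht
        exact ⟨i ≫ s, by rw [hα', Category.assoc, ← Category.assoc j, hji, Category.id_comp, hs]⟩
    have := ne_epi hαne
    -- `A ⟶ U.Z` is a normal epi
    have := (cokS U).1
    have hpU : IsNormalEpiMap (p ≫ U.g) := by
      refine (IsCok.of_ker ?_ (isKer_kernel (p ≫ U.g))).ne
      have hb := isKer_kernel (p ≫ U.g)
      refine IsCok.ne (f := kernel.ι (p ≫ U.g)) ⟨epi_comp _ _, hb.2.1, fun V t ht => ?_⟩
      obtain ⟨t', rfl⟩ := ne_desc hp t (fun V' y hy => by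
        obtain ⟨s, rfl⟩ := hb.2.2 y (by rw [← Category.assoc, hy, zero_comp])
        rw [Category.assoc, ht, comp_zero])
      obtain ⟨s, hs⟩ := hb.2.2 T.f (by rw [← Category.assoc]; exact he2.2.1)
      obtain ⟨t'', rfl⟩ := he2.2.2 t' (by
        rw [← hs]
        simp only [Category.assoc, ht, comp_zero])
      exact ⟨t'', by simp⟩
    obtain ⟨V, v, w, hv, hw, hvw⟩ := hdi _ ⟨_, a0, p ≫ U.g, hA0.nm, hpU, rfl⟩
    have := nm_mono hw
    have := ne_epi hv
    obtain ⟨β, hβ⟩ := ne_desc hαne v (fun V' t ht => by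
      rw [← cancel_mono w, Category.assoc, hvw, zero_comp, ← Category.assoc a0, ← hα]
      rw [Category.assoc, ← Category.assoc t, ht, zero_comp])
    have hβw : β ≫ w = m' ≫ U.g := by
      rw [← cancel_epi α, ← Category.assoc, hβ, hvw, ← Category.assoc α, hα, Category.assoc]
    have hδ := isKer_kernel v
    set δ := kernel.ι v
    have hδv := IsCok.of_ker hv hδ
    obtain ⟨L, r, i, hr, hi, hri⟩ := hdi _ ⟨_, δ, α, hδ.nm, hαne, rfl⟩
    have := ne_epi hr
    -- k factors through i
    obtain ⟨j, hj⟩ := nm_lift hi k (fun V' z hz => by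
      obtain ⟨z', hz'⟩ := hδv.2.2 (α ≫ z) (by
        rw [← Category.assoc, ← hri, Category.assoc, hz, comp_zero])
      have : z = β ≫ z' := by
        rw [← cancel_epi α, ← hz', ← hβ, Category.assoc]
      have hkβ : k ≫ β = 0 := by
        rw [← cancel_mono w, Category.assoc, hβw, hKk, zero_comp]
      rw [this, ← Category.assoc, hkβ, zero_comp])
    -- normal image of `S.f ≫ n ≫ p`
    have hSn : IsNormalMonoMap (S.f ≫ n) := by
      have := (kerS S).1
      refine (IsKer.of_cok (q := cokernel.π (S.f ≫ n)) ?_ (isCok_cokernel _)).nm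
      refine IsKer.nm (f := cokernel.π (S.f ≫ n))
        ⟨mono_comp _ _, cokernel.condition _, fun V' t ht => ?_⟩
      have hz : ∀ ⦃V'' : C⦄ (z : T.Y ⟶ V''), (S.f ≫ n) ≫ z = 0 → t ≫ z = 0 := by
        intro V'' z hz
        obtain ⟨z', rfl⟩ := (isCok_cokernel (S.f ≫ n)).2.2 z hz
        rw [← Category.assoc, ht, zero_comp]
      obtain ⟨t', rfl⟩ := nm_lift hn t (fun V'' z hz' => hz z (by
        rw [Category.assoc, hz', comp_zero]))
      obtain ⟨t'', rfl⟩ := hm2.2.2 t' (by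
        rw [← Category.assoc]
        apply hz
        rw [Category.assoc]
        exact hm2.2.1)
      exact ⟨t'', by simp⟩
    obtain ⟨L', r', i', hr', hi', hri'⟩ := hdi _ ⟨_, S.f ≫ n, p, hSn, hp, rfl⟩
    have := ne_epi hr'
    have := nm_mono hi'
    have hri2 : r' ≫ i' = (S.f ≫ e') ≫ m' := by
      rw [hri', Category.assoc, Category.assoc, hc]
    obtain ⟨i2, hi2⟩ := nm_lift hm' i' (fun V' z hz => by
      rw [← cancel_epi r', ← Category.assoc, hri2, Category.assoc, hz, comp_zero, comp_zero])
    have hri3 : r' ≫ i2 = S.f ≫ e' := by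
      rw [← cancel_mono m', Category.assoc, hi2, hri2]
    -- distributivity
    obtain ⟨a, ha⟩ := (kerS T).2.2 (S.f ≫ n) (by rw [Category.assoc]; exact hm2.2.1)
    obtain ⟨q, hq⟩ := nm_lift hi' (k ≫ m') (fun V' y hy => by
      have hd := hD n T.f p S.f (δ ≫ a0) y hn hnT hp ⟨a, ha.symm⟩
        (fun V'' t u htu => hm2.2.2 t (by
          rw [← Category.assoc, htu, Category.assoc, (kerS T).2.1, comp_zero]))
        (fun V'' z hz => by
          have : m' ≫ z = 0 := by
            rw [← cancel_epi e', ← Category.assoc, hc, Category.assoc, hz, comp_zero]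
          rw [Category.assoc, ← Category.assoc a0, ← hα, Category.assoc, this, comp_zero,
            comp_zero])
        (fun V'' z hz => by
          obtain ⟨z', rfl⟩ := he2.2.2 z (by rw [Category.assoc]; exact hz)
          have : δ ≫ a0 ≫ p ≫ U.g = 0 := by
            rw [← hvw, ← Category.assoc, hδ.2.1, zero_comp]
          have h3 : (δ ≫ a0 ≫ p ≫ U.g) ≫ z' = 0 := by rw [this, zero_comp]
          simpa using h3)
        (by
          have : ((S.f ≫ n) ≫ p) ≫ y = 0 := by
            rw [← hri', Category.assoc, hy, comp_zero]
          simpa using this)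
      have h1 : i ≫ m' ≫ y = 0 := by
        rw [← cancel_epi r, ← Category.assoc, hri, comp_zero, Category.assoc,
          ← Category.assoc α, hα]
        simpa using hd
      rw [← hj, Category.assoc, Category.assoc, h1, comp_zero])
    have hk2 : k = q ≫ i2 := by
      rw [← cancel_mono m', Category.assoc, hi2, hq]
    intro V' z hz
    have : i2 ≫ z = 0 := by
      rw [← cancel_epi r', ← Category.assoc, hri3, hz, comp_zero]
    rw [hk2, Category.assoc, this, comp_zero]
  have hIg : IsCok I.g (S.f ≫ e') := by
    obtain ⟨a, ha⟩ := hSfk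
    refine ⟨(cokS I).1, ?_, fun V t ht => (cokS I).2.2 t (key t ht)⟩
    rw [← ha, Category.assoc]
    have : k ≫ I.g = 0 := (kerS I).2.1
    rw [this, comp_zero]
  obtain ⟨E, hE⟩ := exists_hom (S := S) (T := I) e' (by
    rw [← Category.assoc]; exact hIg.2.1)
  obtain ⟨M, hM⟩ := exists_hom (S := I) (T := U) m' hKk
  refine ⟨I, E, M, ses_ne E (by rw [hE]; exact he') (by rw [hE]; exact hIg),
    ses_nm M (by rw [hM]; exact hm') (by rw [hM]; exact hK), hom_ext ?_⟩
  rw [comp_b, comp_b, hE, hM, hc]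

/-! ### The lattice of normal subobjects -/

/-- kernel of a map as a normal subobject -/
noncomputable def kerN {A B : C} (f : A ⟶ B) : NormalSubobject A :=
  ⟨Subobject.mk (kernel.ι f), by
    have h : IsKer (Subobject.mk (kernel.ι f)).arrow f := by
      refine ⟨inferInstance, ?_, fun W t ht => ?_⟩
      · rw [← Subobject.underlyingIso_hom_comp_eq_mk, Category.assoc, kernel.condition, comp_zero]
      · exact ⟨kernel.lift f t ht ≫ (Subobject.underlyingIso (kernel.ι f)).inv, by simp⟩
    exact h.nm⟩

theorem fac_iff {A W : C} (P : NormalSubobject A) (t : W ⟶ A) :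
    (∃ s, s ≫ P.1.arrow = t) ↔ ∀ ⦃V : C⦄ (y : A ⟶ V), P.1.arrow ≫ y = 0 → t ≫ y = 0 := by
  constructor
  · rintro ⟨s, rfl⟩ V y hy
    rw [Category.assoc, hy, comp_zero]
  · exact nm_lift P.2 t

theorem le_iff {A : C} (P Q : NormalSubobject A) :
    P ≤ Q ↔ ∀ ⦃V : C⦄ (y : A ⟶ V), Q.1.arrow ≫ y = 0 → P.1.arrow ≫ y = 0 := by
  rw [← fac_iff]
  constructor
  · intro h
    exact ⟨Subobject.ofLE P.1 Q.1 h, Subobject.ofLE_arrow _⟩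
  · rintro ⟨s, hs⟩
    exact Subobject.le_of_comm s hs

theorem kerN_zero {A B : C} (f : A ⟶ B) : (kerN f).1.arrow ≫ f = 0 := by
  change (Subobject.mk (kernel.ι f)).arrow ≫ f = 0
  rw [← Subobject.underlyingIso_hom_comp_eq_mk, Category.assoc, kernel.condition, comp_zero]

theorem kerN_fac {A B W : C} (f : A ⟶ B) (t : W ⟶ A) :
    (∃ s, s ≫ (kerN f).1.arrow = t) ↔ t ≫ f = 0 := by
  constructor
  · rintro ⟨s, rfl⟩
    rw [Category.assoc, kerN_zero, comp_zero]
  · intro ht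
    exact ⟨kernel.lift f t ht ≫ (Subobject.underlyingIso (kernel.ι f)).inv, by simp [kerN]⟩

/-- the join -/
noncomputable def supN {A : C} (P Q : NormalSubobject A) : NormalSubobject A :=
  kerN (cokernel.π P.1.arrow ≫ cokernel.π (Q.1.arrow ≫ cokernel.π P.1.arrow))

theorem supN_kill {A V : C} (P Q : NormalSubobject A) (y : A ⟶ V) :
    (supN P Q).1.arrow ≫ y = 0 ↔ P.1.arrow ≫ y = 0 ∧ Q.1.arrow ≫ y = 0 := by
  unfold supN
  constructor
  · intro h
    constructor
    · obtain ⟨s, hs⟩ := (kerN_fac (cokernel.π P.1.arrow ≫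
        cokernel.π (Q.1.arrow ≫ cokernel.π P.1.arrow)) P.1.arrow).2
          (by rw [← Category.assoc, cokernel.condition, zero_comp])
      rw [← hs, Category.assoc]
      rw [h, comp_zero]
    · obtain ⟨s, hs⟩ := (kerN_fac (cokernel.π P.1.arrow ≫
        cokernel.π (Q.1.arrow ≫ cokernel.π P.1.arrow)) Q.1.arrow).2
          (by rw [← Category.assoc, cokernel.condition])
      rw [← hs, Category.assoc]
      rw [h, comp_zero]
  · rintro ⟨h1, h2⟩
    obtain ⟨y1, rfl⟩ := (isCok_cokernel P.1.arrow).2.2 y h1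
    obtain ⟨y2, rfl⟩ := (isCok_cokernel (Q.1.arrow ≫ cokernel.π P.1.arrow)).2.2 y1
      (by rw [Category.assoc, h2])
    have := kerN_zero (cokernel.π P.1.arrow ≫ cokernel.π (Q.1.arrow ≫ cokernel.π P.1.arrow))
    rw [← Category.assoc (cokernel.π _), ← Category.assoc]
    rw [this, zero_comp]

/-- the meet -/
noncomputable def infN {A : C} (P Q : NormalSubobject A) : NormalSubobject A :=
  kerN (cokernel.π (kernel.ι (P.1.arrow ≫ cokernel.π Q.1.arrow) ≫ P.1.arrow))

theorem infN_fac {A W : C} (P Q : NormalSubobject A) (t : W ⟶ A) :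
    (∃ s, s ≫ (infN P Q).1.arrow = t) ↔
      (∃ s, s ≫ P.1.arrow = t) ∧ (∃ s, s ≫ Q.1.arrow = t) := by
  unfold infN
  rw [kerN_fac]
  have hQ := IsKer.of_cok Q.2 (isCok_cokernel Q.1.arrow)
  have hker := isKer_kernel (P.1.arrow ≫ cokernel.π Q.1.arrow)
  constructor
  · intro h
    have h' : ∀ ⦃V : C⦄ (z : A ⟶ V),
        (kernel.ι (P.1.arrow ≫ cokernel.π Q.1.arrow) ≫ P.1.arrow) ≫ z = 0 → t ≫ z = 0 := by
      intro V z hz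
      obtain ⟨z', rfl⟩ := (isCok_cokernel _).2.2 z hz
      rw [← Category.assoc, h, zero_comp]
    constructor
    · exact (fac_iff P t).2 fun V y hy => h' y (by rw [Category.assoc, hy, comp_zero])
    · exact hQ.2.2 t (h' _ (by rw [Category.assoc]; exact hker.2.1))
  · rintro ⟨⟨s, rfl⟩, ⟨s', hs'⟩⟩
    obtain ⟨l, rfl⟩ := hker.2.2 s (by
      rw [← Category.assoc, ← hs', Category.assoc, cokernel.condition, comp_zero])
    rw [Category.assoc, Category.assoc, ← Category.assoc (kernel.ι _), cokernel.condition,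
      comp_zero]

theorem le_iff_fac {A : C} (P Q : NormalSubobject A) :
    P ≤ Q ↔ ∃ s, s ≫ Q.1.arrow = P.1.arrow := by
  rw [le_iff, fac_iff]

/-- the lattice structure -/
@[reducible] noncomputable def latN (A : C) : Lattice (NormalSubobject A) :=
  { (inferInstance : PartialOrder (NormalSubobject A)) with
    sup := supN
    inf := infN
    le_sup_left := fun P Q => (le_iff _ _).2 fun _ y hy => ((supN_kill P Q y).1 hy).1
    le_sup_right := fun P Q => (le_iff _ _).2 fun _ y hy => ((supN_kill P Q y).1 hy).2
    sup_le := fun P Q R hP hQ => (le_iff _ _).2 fun _ y hy =>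
      (supN_kill P Q y).2 ⟨(le_iff _ _).1 hP y hy, (le_iff _ _).1 hQ y hy⟩
    inf_le_left := fun P Q => (le_iff_fac _ _).2 ((infN_fac P Q _).1 ⟨𝟙 _, by simp⟩).1
    inf_le_right := fun P Q => (le_iff_fac _ _).2 ((infN_fac P Q _).1 ⟨𝟙 _, by simp⟩).2
    le_inf := fun P Q R hP hQ => (le_iff_fac _ _).2
      ((infN_fac Q R _).2 ⟨(le_iff_fac _ _).1 hP, (le_iff_fac _ _).1 hQ⟩) }

theorem distrib_iff (A : C) : NormalSubobjectsDistrib A ↔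
    ∀ N X M : NormalSubobject A, infN (supN N M) (supN X M) ≤ supN (infN N X) M := by
  letI := latN A
  change _ ↔ ∀ N X M : NormalSubobject A, (N ⊔ M) ⊓ (X ⊔ M) ≤ (N ⊓ X) ⊔ M
  constructor
  · intro h
    have h' : ∀ P Q R : NormalSubobject A, P ⊓ (Q ⊔ R) = (P ⊓ Q) ⊔ (P ⊓ R) := fun P Q R =>
      h P Q R (Q ⊔ R) _ (P ⊓ Q) (P ⊓ R) _ isLUB_pair isGLB_pair isGLB_pair isGLB_pair isLUB_pair
    intro N X M
    rw [h', inf_comm (N ⊔ M) X, h', inf_comm (N ⊔ M) M, inf_comm X N]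
    refine sup_le (sup_le le_sup_left (inf_le_right.trans le_sup_right))
      (inf_le_left.trans le_sup_right)
  · intro h
    have h' : ∀ P Q R : NormalSubobject A, P ⊓ (Q ⊔ R) ≤ (P ⊓ Q) ⊔ (P ⊓ R) := by
      intro P Q R
      have h1 := h P R (P ⊓ Q)
      have h2 := h P Q R
      have h3 : P ⊓ (Q ⊔ R) ≤ (P ⊓ Q) ⊔ R :=
        (inf_le_inf_right _ le_sup_left).trans h2
      have h4 : P ⊓ (Q ⊔ R) ≤ (P ⊔ P ⊓ Q) ⊓ (R ⊔ P ⊓ Q) :=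
        le_inf (inf_le_left.trans le_sup_left) (h3.trans (sup_comm _ _).le)
      exact (h4.trans h1).trans (sup_comm _ _).le
    intro P Q R S T U V W hS hT hU hV hW
    obtain rfl := hS.unique isLUB_pair
    obtain rfl := hT.unique isGLB_pair
    obtain rfl := hU.unique isGLB_pair
    obtain rfl := hV.unique isGLB_pair
    obtain rfl := hW.unique isLUB_pair
    exact le_antisymm (h' _ _ _)
      (sup_le (inf_le_inf_left _ le_sup_left) (inf_le_inf_left _ le_sup_right))

/-- normal subobject from a normal mono -/
noncomputable def mkN {A N : C} (n : N ⟶ A) (hn : IsNormalMonoMap n) : NormalSubobject A :=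
  kerN (cokernel.π n)

theorem mkN_fac {A N W : C} (n : N ⟶ A) (hn : IsNormalMonoMap n) (t : W ⟶ A) :
    (∃ s, s ≫ (mkN n hn).1.arrow = t) ↔ ∃ s, s ≫ n = t := by
  unfold mkN
  rw [kerN_fac]
  have h := IsKer.of_cok hn (isCok_cokernel n)
  refine ⟨h.2.2 t, ?_⟩
  rintro ⟨s, rfl⟩
  rw [Category.assoc, h.2.1, comp_zero]

theorem mkN_kill {A N W : C} (n : N ⟶ A) (hn : IsNormalMonoMap n) (y : A ⟶ W) :
    (mkN n hn).1.arrow ≫ y = 0 ↔ n ≫ y = 0 := by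
  obtain ⟨s, hs⟩ := (mkN_fac n hn n).2 ⟨𝟙 _, by simp⟩
  obtain ⟨t, ht⟩ := (mkN_fac n hn (mkN n hn).1.arrow).1 ⟨𝟙 _, by simp⟩
  constructor
  · intro h
    rw [← hs, Category.assoc, h, comp_zero]
  · intro h
    rw [← ht, Category.assoc, h, comp_zero]

theorem dist_iff : Dist C ↔ ∀ A : C, NormalSubobjectsDistrib A := by
  constructor
  · intro hD A
    rw [distrib_iff]
    intro N X M
    rw [le_iff]
    intro V y hy
    obtain ⟨hy1, hy2⟩ := (supN_kill _ _ y).1 hy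
    obtain ⟨y', rfl⟩ := (isCok_cokernel M.1.arrow).2.2 y hy2
    obtain ⟨⟨s1, hs1⟩, ⟨s2, hs2⟩⟩ := (infN_fac (supN N M) (supN X M) _).1 ⟨𝟙 _, rfl⟩
    obtain ⟨⟨k, hk⟩, ⟨k', hk'⟩⟩ := (infN_fac N X _).1 ⟨𝟙 _, rfl⟩
    rw [Category.id_comp] at hs1 hs2 hk hk'
    refine hD N.1.arrow X.1.arrow (cokernel.π M.1.arrow) k _ y' N.2 X.2
      (isCok_cokernel _).ne ⟨k', by rw [hk, hk']⟩ ?_ ?_ ?_ ?_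
    · intro V' t u htu
      obtain ⟨r, hr⟩ := (infN_fac N X (t ≫ N.1.arrow)).2 ⟨⟨t, rfl⟩, ⟨u, htu.symm⟩⟩
      exact ⟨r, by rw [← cancel_mono N.1.arrow, Category.assoc, hk, hr]⟩
    · intro V' z hz
      rw [← hs1, Category.assoc, (supN_kill N M _).2 ⟨hz, ?_⟩, comp_zero]
      rw [← Category.assoc, cokernel.condition, zero_comp]
    · intro V' z hz
      rw [← hs2, Category.assoc, (supN_kill X M _).2 ⟨hz, ?_⟩, comp_zero]
      rw [← Category.assoc, cokernel.condition, zero_comp]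
    · rw [← Category.assoc, hk]
      exact hy1
  · intro h A N X B K D W n x p k d y hn hx hp hk1 hk2 hd1 hd2 hy
    obtain ⟨s, hs⟩ := hk1
    have h := (distrib_iff A).1 (h A) (mkN n hn) (mkN x hx) (kerN p)
    have hM : ∀ ⦃V : C⦄ (z : A ⟶ V), (kerN p).1.arrow ≫ z = 0 → ∃ z', p ≫ z' = z := by
      intro V z hz
      refine ne_desc hp z fun V' t ht => ?_
      obtain ⟨t', rfl⟩ := (kerN_fac p t).2 ht
      rw [Category.assoc, hz, comp_zero]
    have hdf : ∃ l, l ≫ (infN (supN (mkN n hn) (kerN p)) (supN (mkN x hx) (kerN p))).1.arrow = d := by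
      rw [infN_fac, fac_iff, fac_iff]
      constructor
      · intro V z hz
        obtain ⟨h1, h2⟩ := (supN_kill _ _ _).1 hz
        obtain ⟨z', rfl⟩ := hM z h2
        exact hd1 z' ((mkN_kill n hn _).1 h1)
      · intro V z hz
        obtain ⟨h1, h2⟩ := (supN_kill _ _ _).1 hz
        obtain ⟨z', rfl⟩ := hM z h2
        exact hd2 z' ((mkN_kill x hx _).1 h1)
    obtain ⟨l, rfl⟩ := hdf
    rw [Category.assoc, (le_iff _ _).1 h (p ≫ y), comp_zero]
    rw [supN_kill]
    constructor
    · obtain ⟨h1, h2⟩ := (infN_fac (mkN n hn) (mkN x hx) _).1 ⟨𝟙 _, rfl⟩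
      rw [mkN_fac] at h1 h2
      obtain ⟨t, ht⟩ := h1
      obtain ⟨u, hu⟩ := h2
      obtain ⟨r, rfl⟩ := hk2 t u (by rw [ht, hu])
      rw [Category.id_comp] at ht
      rw [← ht]
      simp only [Category.assoc, hy, comp_zero]
    · rw [← Category.assoc, kerN_zero, zero_comp]

end Main

end DiEx

/-- Let `C` be a di-exact z-exact category.  Then the category `SES C`
of short exact sequences of `C` is di-exact if and only if the lattice of normal
subobjects of `A` is distributive for every object `A` of `C`. -/
theorem stmt15 {C : Type u} [Category.{v} C] [HasZeroObject C] [HasZeroMorphisms C]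
    [HasKernels C] [HasCokernels C] (hdi : IsDiExact C) :
    IsDiExact (SES C) ↔ ∀ A : C, NormalSubobjectsDistrib A := by
  rw [← DiEx.dist_iff]
  exact ⟨DiEx.dist_of_ses hdi, DiEx.ses_of_dist hdi⟩
end

section
/- Let X be a z-exact category. Then the lattice nsub(A) of normal subobjects is distributive for every object A of X if and only if the lattice nsub(S) of normal subobjects is distributive for every object S of the category ses(X) of short exact sequences of X. Consequently, when this holds, nsub(S) is distributive for every object S of the iterated category ses^n(X), for every n. -/
open CategoryTheory CategoryTheory.Limits

universe v u

variable {C : Type u} [Category.{v} C]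

/-- A pointed category bundled with its instances, used to iterate the `SES`
construction. -/
structure ZCat.{v', u'} : Type (max u' v' + 1) where
  obj : Type (max u' v')
  [cat : Category.{v'} obj]
  [zm : HasZeroMorphisms obj]

attribute [instance] ZCat.cat ZCat.zm

/-- `iterSES C n` is the category `ses^(n+1)(C)` of `(n+1)`-fold iterated short exact
sequences of `C`. -/
def iterSES (C : Type u) [Category.{v} C] [HasZeroMorphisms C] : ℕ → ZCat.{v, u}
  | 0 => { obj := SES C }
  | n + 1 => { obj := SES (iterSES C n).obj }

namespace SESaux

section

variable {C : Type u} [Category.{v} C] [HasZeroMorphisms C]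

lemma comp_b {S T U : SES C} (p : S ⟶ T) (q : T ⟶ U) : (p ≫ q).b = p.b ≫ q.b := rfl

lemma id_b (S : SES C) : SES.Hom.b (𝟙 S) = 𝟙 S.Y := rfl

lemma zero_b (S T : SES C) : SES.Hom.b (0 : S ⟶ T) = 0 := rfl

lemma mono_f (S : SES C) : Mono S.f := by
  obtain ⟨h⟩ := S.isKernel
  exact mono_of_isLimit_fork h

lemma epi_g (S : SES C) : Epi S.g := by
  obtain ⟨h⟩ := S.isCokernel
  exact epi_of_isColimit_cofork h

lemma exists_lift (S : SES C) {W : C} (k : W ⟶ S.Y) (hk : k ≫ S.g = 0) :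
    ∃ l : W ⟶ S.X, l ≫ S.f = k := by
  obtain ⟨h⟩ := S.isKernel
  obtain ⟨l, hl⟩ := KernelFork.IsLimit.lift' h k hk
  exact ⟨l, hl⟩

lemma exists_desc (S : SES C) {W : C} (k : S.Y ⟶ W) (hk : S.f ≫ k = 0) :
    ∃ l : S.Z ⟶ W, S.g ≫ l = k := by
  obtain ⟨h⟩ := S.isCokernel
  obtain ⟨l, hl⟩ := CokernelCofork.IsColimit.desc' h k hk
  exact ⟨l, hl⟩

/-- Morphisms are determined by their middle component. -/
lemma ext_b {S T : SES C} {p q : S ⟶ T} (h : p.b = q.b) : p = q := by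
  have := mono_f T
  have := epi_g S
  apply SES.Hom.ext
  · rw [← cancel_mono T.f, ← p.comm₁, ← q.comm₁, h]
  · exact h
  · rw [← cancel_epi S.g, p.comm₂, q.comm₂, h]

/-- A middle component extends to a morphism as soon as it is compatible. -/
lemma exists_hom (S T : SES C) (b : S.Y ⟶ T.Y) (h : S.f ≫ b ≫ T.g = 0) :
    ∃ p : S ⟶ T, p.b = b := by
  obtain ⟨a, ha⟩ := exists_lift T (S.f ≫ b) (by simpa using h)
  obtain ⟨c, hc⟩ := exists_desc S (b ≫ T.g) h
  exact ⟨⟨a, b, c, ha.symm, hc⟩, rfl⟩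

lemma comm_zero {S T : SES C} (p : S ⟶ T) : S.f ≫ p.b ≫ T.g = 0 := by
  rw [← Category.assoc, p.comm₁, Category.assoc, T.w, comp_zero]

variable [HasKernels C] [HasCokernels C]

/-- The short exact sequence given by the kernel of `h`. -/
noncomputable def ofKer {B D : C} (h : B ⟶ D) : SES C where
  X := kernel h
  Y := B
  Z := cokernel (kernel.ι h)
  f := kernel.ι h
  g := cokernel.π (kernel.ι h)
  w := cokernel.condition _
  isKernel := ⟨KernelFork.IsLimit.ofι' _ _ (fun {A} k hk => ⟨kernel.lift h k (by
    rw [← cokernel.π_desc (kernel.ι h) h (kernel.condition h), ← Category.assoc, hk,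
      zero_comp]), kernel.lift_ι _ _ _⟩)⟩
  isCokernel := ⟨cokernelIsCokernel _⟩

/-- The short exact sequence given by the cokernel of `m`. -/
noncomputable def ofCoker {U B : C} (m : U ⟶ B) : SES C where
  X := kernel (cokernel.π m)
  Y := B
  Z := cokernel m
  f := kernel.ι (cokernel.π m)
  g := cokernel.π m
  w := kernel.condition _
  isKernel := ⟨kernelIsKernel _⟩
  isCokernel := ⟨CokernelCofork.IsColimit.ofπ' _ _ (fun {A} k hk => ⟨cokernel.desc m k (by
    rw [← kernel.lift_ι (cokernel.π m) m (cokernel.condition m), Category.assoc, hk,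
      comp_zero]), cokernel.π_desc _ _ _⟩)⟩

lemma exists_kernel {S T : SES C} (p : S ⟶ T) :
    ∃ (K : SES C) (i : K ⟶ S) (w : i ≫ p = 0), Nonempty (IsLimit (KernelFork.ofι i w)) ∧
      Mono i.b ∧ ∀ ⦃W : C⦄ (k : W ⟶ S.Y), k ≫ p.b = 0 → ∃ l, l ≫ i.b = k := by
  obtain ⟨i, hi⟩ := exists_hom (ofKer (kernel.ι p.b ≫ S.g)) S (kernel.ι p.b)
    (kernel.condition (kernel.ι p.b ≫ S.g))
  have hm : Mono i.b := by rw [hi]; exact inferInstanceAs (Mono (kernel.ι p.b))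
  have w : i ≫ p = 0 := by
    apply ext_b
    rw [comp_b, hi]
    exact kernel.condition p.b
  have key : ∀ {W : SES C} (k : W ⟶ S), k ≫ p = 0 → ∃ l, l ≫ i = k := by
    intro W k hk
    have hk' : k.b ≫ p.b = 0 := by rw [← comp_b, hk, zero_b]
    obtain ⟨l, hl⟩ := exists_hom W (ofKer (kernel.ι p.b ≫ S.g)) (kernel.lift p.b k.b hk') (by
      have e : (W.f ≫ kernel.lift p.b k.b hk') ≫ kernel.ι p.b ≫ S.g = 0 := by
        simpa using comm_zero k
      change W.f ≫ kernel.lift p.b k.b hk' ≫ cokernel.π (kernel.ι (kernel.ι p.b ≫ S.g)) = 0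
      rw [← Category.assoc, ← kernel.lift_ι _ _ e, Category.assoc]
      exact (congrArg _ (cokernel.condition _)).trans comp_zero)
    refine ⟨l, ext_b ?_⟩
    rw [comp_b, hl, hi]
    exact kernel.lift_ι _ _ _
  have : Mono i := ⟨fun {W} x y h => ext_b (by
    rw [← cancel_mono i.b, ← comp_b, ← comp_b, h])⟩
  refine ⟨_, i, w, ⟨KernelFork.IsLimit.ofι' _ _ (fun {A} k hk =>
    ⟨(key k hk).choose, (key k hk).choose_spec⟩)⟩, hm, ?_⟩
  intro W k hk
  exact ⟨kernel.lift p.b k hk, by rw [hi]; exact kernel.lift_ι _ _ _⟩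

instance : HasKernels (SES C) where
  has_limit p := by
    obtain ⟨K, i, w, ⟨h⟩, -⟩ := exists_kernel p
    exact ⟨⟨⟨_, h⟩⟩⟩

instance : HasCokernels (SES C) where
  has_colimit {S T} p := by
    obtain ⟨i, hi⟩ := exists_hom T (ofCoker (T.f ≫ cokernel.π p.b)) (cokernel.π p.b)
      ((Category.assoc _ _ _).symm.trans (cokernel.condition (T.f ≫ cokernel.π p.b)))
    have he : Epi i.b := by rw [hi]; exact inferInstanceAs (Epi (cokernel.π p.b))
    have w : p ≫ i = 0 := by
      apply ext_b
      rw [comp_b, hi]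
      exact cokernel.condition p.b
    have key : ∀ {W : SES C} (k : T ⟶ W), p ≫ k = 0 → ∃ l, i ≫ l = k := by
      intro W k hk
      have hk' : p.b ≫ k.b = 0 := by rw [← comp_b, hk, zero_b]
      obtain ⟨l, hl⟩ := exists_hom (ofCoker (T.f ≫ cokernel.π p.b)) W
        (cokernel.desc p.b k.b hk') (by
        have e : (T.f ≫ cokernel.π p.b) ≫ cokernel.desc p.b k.b hk' ≫ W.g = 0 := by
          simpa using comm_zero k
        change kernel.ι (cokernel.π (T.f ≫ cokernel.π p.b)) ≫
          cokernel.desc p.b k.b hk' ≫ W.g = 0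
        rw [← cokernel.π_desc _ _ e, ← Category.assoc]
        exact (congrArg (· ≫ _) (kernel.condition _)).trans zero_comp)
      refine ⟨l, ext_b ?_⟩
      rw [comp_b, hl, hi]
      exact cokernel.π_desc _ _ _
    have : Epi i := ⟨fun {W} x y h => ext_b (by
      rw [← cancel_epi i.b, ← comp_b, ← comp_b, h])⟩
    have h : IsColimit (CokernelCofork.ofπ i w) :=
      CokernelCofork.IsColimit.ofπ' _ _ (fun {A} k hk =>
        ⟨(key k hk).choose, (key k hk).choose_spec⟩)
    exact ⟨⟨⟨_, h⟩⟩⟩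

end

section

variable {C : Type u} [Category.{v} C] [HasZeroMorphisms C]

lemma normalMono_iff {A B : C} (m : A ⟶ B) :
    Nonempty (NormalMono m) ↔ Mono m ∧ ∃ (D : C) (g : B ⟶ D), m ≫ g = 0 ∧
      ∀ ⦃W : C⦄ (k : W ⟶ B), k ≫ g = 0 → ∃ l, l ≫ m = k := by
  constructor
  · rintro ⟨h⟩
    refine ⟨mono_of_isLimit_fork h.isLimit, h.Z, h.g, h.w, fun W k hk => ?_⟩
    obtain ⟨l, hl⟩ := KernelFork.IsLimit.lift' h.isLimit k hk
    exact ⟨l, hl⟩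
  · rintro ⟨hm, D, g, w, h⟩
    exact ⟨⟨D, g, w, KernelFork.IsLimit.ofι' _ _ (fun {A} k hk =>
      ⟨(h k hk).choose, (h k hk).choose_spec⟩)⟩⟩

lemma normal_mk {A B : C} (m : A ⟶ B) [Mono m] (h : Nonempty (NormalMono m)) :
    Nonempty (NormalMono (Subobject.mk m).arrow) := by
  rw [normalMono_iff] at h ⊢
  obtain ⟨-, D, g, w, h⟩ := h
  refine ⟨inferInstance, D, g, ?_, fun W k hk => ?_⟩
  · rw [← Subobject.underlyingIso_hom_comp_eq_mk, Category.assoc, w, comp_zero]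
  · obtain ⟨l, hl⟩ := h k hk
    exact ⟨l ≫ (Subobject.underlyingIso m).inv, by simp [hl]⟩

variable [HasKernels C] [HasCokernels C]

/-- The middle component of a kernel is a kernel of the middle component. -/
lemma normal_b {N S : SES C} (m : N ⟶ S) (h : Nonempty (NormalMono m)) :
    Nonempty (NormalMono m.b) := by
  rw [normalMono_iff] at h ⊢
  obtain ⟨hm, T, p, w, h⟩ := h
  obtain ⟨K, i, wi, ⟨hi⟩, hib, hl⟩ := exists_kernel p
  obtain ⟨e, he⟩ := h i wi
  obtain ⟨d, hd⟩ := KernelFork.IsLimit.lift' hi m w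
  replace hd : d ≫ i = m := hd
  have hde : d ≫ e = 𝟙 _ := by
    rw [← cancel_mono m, Category.assoc, he, hd, Category.id_comp]
  have hdb : d.b ≫ e.b = 𝟙 _ := by rw [← comp_b, hde, id_b]
  have hmb : Mono d.b := mono_of_mono_fac (hdb.trans rfl)
  refine ⟨by rw [← hd, comp_b]; exact mono_comp _ _, T.Y, p.b,
    by rw [← comp_b, w, zero_b], fun W k hk => ?_⟩
  obtain ⟨l, hl⟩ := hl k hk
  exact ⟨l ≫ e.b, by rw [Category.assoc, ← comp_b, he, hl]⟩

lemma mono_b {N S : SES C} (m : N ⟶ S) (h : Nonempty (NormalMono m)) : Mono m.b :=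
  ((normalMono_iff _).1 (normal_b m h)).1

/-- Middle component of a normal subobject. -/
noncomputable def mid (S : SES C) (P : NormalSubobject S) : NormalSubobject S.Y :=
  have := mono_b P.1.arrow P.2
  ⟨Subobject.mk P.1.arrow.b, normal_mk _ (normal_b _ P.2)⟩

lemma mid_le_iff (S : SES C) (P Q : NormalSubobject S) : mid S P ≤ mid S Q ↔ P ≤ Q := by
  have := mono_b P.1.arrow P.2
  have := mono_b Q.1.arrow Q.2
  change Subobject.mk P.1.arrow.b ≤ Subobject.mk Q.1.arrow.b ↔ P.1 ≤ Q.1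
  constructor
  · intro h
    obtain ⟨-, T, p, w, hQ⟩ := (normalMono_iff _).1 Q.2
    obtain ⟨l, hl⟩ := hQ P.1.arrow (by
      apply ext_b
      rw [comp_b, ← Subobject.ofMkLEMk_comp h, Category.assoc, ← comp_b, w, zero_b, zero_b,
        comp_zero])
    exact Subobject.le_of_comm l hl
  · intro h
    refine Subobject.mk_le_mk_of_comm (Subobject.ofLE _ _ h).b ?_
    rw [← comp_b, Subobject.ofLE_arrow]

lemma mid_surj (S : SES C) : Function.Surjective (mid S) := by
  intro K
  obtain ⟨hK, D, g, w, h⟩ := (normalMono_iff _).1 K.2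
  obtain ⟨p, hp⟩ := exists_hom S (ofCoker (S.f ≫ g)) g
    ((Category.assoc _ _ _).symm.trans (cokernel.condition (S.f ≫ g)))
  obtain ⟨N, i, wi, ⟨hi⟩, hib, hl⟩ := exists_kernel p
  have hn : Nonempty (NormalMono i) := ⟨⟨_, p, wi, hi⟩⟩
  have : Mono i := ((normalMono_iff _).1 hn).1
  refine ⟨⟨Subobject.mk i, normal_mk i hn⟩, Subtype.ext ?_⟩
  have hmb := mono_b (Subobject.mk i).arrow (normal_mk i hn)
  have hib0 : i.b ≫ g = 0 := by
    have := congrArg SES.Hom.b wi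
    rw [comp_b, hp] at this
    exact this
  change Subobject.mk (Subobject.mk i).arrow.b = K.1
  apply le_antisymm
  · obtain ⟨l, hl'⟩ := h (Subobject.mk i).arrow.b (by
      rw [← Subobject.underlyingIso_hom_comp_eq_mk, comp_b, Category.assoc, hib0, comp_zero])
    exact Subobject.mk_le_of_comm l hl'
  · obtain ⟨l, hl'⟩ := hl K.1.arrow (by rw [hp]; exact w)
    refine Subobject.le_mk_of_comm (l ≫ (Subobject.underlyingIso i).inv.b) ?_
    rw [Category.assoc, ← comp_b, Subobject.underlyingIso_arrow, hl']

/-- Normal subobjects of a short exact sequence are those of its middle object. -/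
noncomputable def midIso (S : SES C) : NormalSubobject S ≃o NormalSubobject S.Y :=
  RelIso.ofSurjective (OrderEmbedding.ofMapLEIff (mid S) (mid_le_iff S)) (mid_surj S)

end

/-- Distributivity in the `IsLUB` / `IsGLB` form. -/
def DistribPoset (α : Type*) [PartialOrder α] : Prop :=
  ∀ P Q R S T U V W : α,
    IsLUB {Q, R} S → IsGLB {P, S} T → IsGLB {P, Q} U → IsGLB {P, R} V →
    IsLUB {U, V} W → T = W

lemma DistribPoset.of_iso {α β : Type*} [PartialOrder α] [PartialOrder β] (e : α ≃o β)
    (h : DistribPoset β) : DistribPoset α := by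
  intro P Q R S T U V W h1 h2 h3 h4 h5
  apply e.injective
  have l : ∀ {x y z : α}, IsLUB {x, y} z → IsLUB {e x, e y} (e z) := by
    intro x y z hz
    have := e.isLUB_image'.2 hz
    rwa [Set.image_pair] at this
  have g : ∀ {x y z : α}, IsGLB {x, y} z → IsGLB {e x, e y} (e z) := by
    intro x y z hz
    have := e.isGLB_image'.2 hz
    rwa [Set.image_pair] at this
  exact h _ _ _ _ _ _ _ _ (l h1) (g h2) (g h3) (g h4) (l h5)

section

variable {C : Type u} [Category.{v} C] [HasZeroMorphisms C] [HasKernels C] [HasCokernels C]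

lemma distrib_iff (S : SES C) : NormalSubobjectsDistrib S ↔ NormalSubobjectsDistrib S.Y :=
  ⟨fun h => DistribPoset.of_iso (midIso S).symm h, fun h => DistribPoset.of_iso (midIso S) h⟩

end

end SESaux

/-- Let `C` be a z-exact category.  The lattice of normal subobjects is
distributive for every object of `C` if and only if it is distributive for every object of
the category `SES C` of short exact sequences of `C`.  Consequently, when this holds, the
lattice of normal subobjects is distributive for every object of every iterated category
`ses^n(C)`. -/
theorem stmt17 {C : Type u} [Category.{v} C] [HasZeroObject C] [HasZeroMorphisms C]
    [HasKernels C] [HasCokernels C] :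
    ((∀ A : C, NormalSubobjectsDistrib A) ↔ (∀ S : SES C, NormalSubobjectsDistrib S)) ∧
    ((∀ A : C, NormalSubobjectsDistrib A) →
      ∀ (n : ℕ) (S : (iterSES C n).obj), NormalSubobjectsDistrib S) := by
  refine ⟨⟨fun h S => (SESaux.distrib_iff S).2 (h _),
    fun h A => (SESaux.distrib_iff (SESaux.ofKer (𝟙 A))).1 (h _)⟩, fun h n => ?_⟩
  have key : HasKernels (iterSES C n).obj ∧ HasCokernels (iterSES C n).obj ∧
      ∀ S : (iterSES C n).obj, NormalSubobjectsDistrib S := by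
    induction n with
    | zero =>
      exact ⟨inferInstanceAs (HasKernels (SES C)), inferInstanceAs (HasCokernels (SES C)),
        fun S => (SESaux.distrib_iff (C := C) S).2 (h _)⟩
    | succ n ih =>
      obtain ⟨h1, h2, h3⟩ := ih
      exact ⟨inferInstanceAs (HasKernels (SES (iterSES C n).obj)),
        inferInstanceAs (HasCokernels (SES (iterSES C n).obj)),
        fun S => (SESaux.distrib_iff (C := (iterSES C n).obj) S).2 (h3 _)⟩
  exact key.2.2
end
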